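/- Assume E₀, U, L, K satisfy the hypothesis. Let (u,w) ∈ E₀ × H be such that K^⋄Ku − L^⋄w ∈ E, i.e. there exists e ∈ E with ⟨e,x⟩_E = ⟨Ku,Kx⟩_U − ⟨w,Lx⟩_H for all x ∈ E₀. Then w ∈ D(D) and Dw = e. -/

import Mathlib

open scoped ComplexInnerProductSpace
open Filter Topology Classical

noncomputable section

variable {E H : Type*}
  [NormedAddCommGroup E] [InnerProductSpace ℂ E] [CompleteSpace E]
  [NormedAddCommGroup H] [InnerProductSpace ℂ H] [CompleteSpace H]

/-- The operator `G := (−D₀)*`. -/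
def Gop (D₀ : H →ₗ.[ℂ] E) : E →ₗ.[ℂ] H := (-D₀).adjoint

/-- The operator `D := −(G₀)*`. -/
def Dop (G₀ : E →ₗ.[ℂ] H) : H →ₗ.[ℂ] E := -(G₀.adjoint)

/-- Pointwise application of `G`, defined to be `0` off the domain. -/
def Gap (D₀ : H →ₗ.[ℂ] E) (u : E) : H :=
  if h : u ∈ (Gop D₀).domain then Gop D₀ ⟨u, h⟩ else 0

/-- Pointwise application of `D`, defined to be `0` off the domain. -/
def Dap (G₀ : E →ₗ.[ℂ] H) (w : H) : E :=
  if h : w ∈ (Dop G₀).domain then Dop G₀ ⟨w, h⟩ else 0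

/-- The graph inner product of `D_G`: `⟪x,y⟫_E + ⟪Gx,Gy⟫_H`. -/
def innG (D₀ : H →ₗ.[ℂ] E) (x y : E) : ℂ := ⟪x, y⟫ + ⟪Gap D₀ x, Gap D₀ y⟫

/-- The graph inner product of `D_D`: `⟪x,y⟫_H + ⟪Dx,Dy⟫_E`. -/
def innD (G₀ : E →ₗ.[ℂ] H) (x y : H) : ℂ := ⟪x, y⟫ + ⟪Dap G₀ x, Dap G₀ y⟫

/-- The boundary data space `BD(G)`, the orthogonal complement of `D(G₀)` in `D_G`. -/
def BDG (G₀ : E →ₗ.[ℂ] H) (D₀ : H →ₗ.[ℂ] E) : Set E :=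
  {u | u ∈ (Gop D₀).domain ∧ ∀ v ∈ G₀.domain, innG D₀ u v = 0}

/-- The boundary data space `BD(D)`, the orthogonal complement of `D(D₀)` in `D_D`. -/
def BDD (G₀ : E →ₗ.[ℂ] H) (D₀ : H →ₗ.[ℂ] E) : Set H :=
  {w | w ∈ (Dop G₀).domain ∧ ∀ v ∈ D₀.domain, innD G₀ w v = 0}

variable {U E₀ : Type*}
  [NormedAddCommGroup U] [InnerProductSpace ℂ U] [CompleteSpace U]
  [NormedAddCommGroup E₀] [InnerProductSpace ℂ E₀] [CompleteSpace E₀]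

/-- Closedness of the operator `(L,K) : E₀ ⊆ E → H ⊕ U`: whenever `wₙ` in `E₀` with `wₙ → w`
in `E`, `Lwₙ → v` in `H` and `Kwₙ → z` in `U`, then `w ∈ E₀`, `Lw = v` and `Kw = z`. -/
def ClosedLK (j : E₀ →L[ℂ] E) (L : E₀ →L[ℂ] H) (K : E₀ →L[ℂ] U) : Prop :=
  ∀ (f : ℕ → E₀) (w : E) (v : H) (z : U),
    Tendsto (fun n => j (f n)) atTop (nhds w) →
    Tendsto (fun n => L (f n)) atTop (nhds v) →
    Tendsto (fun n => K (f n)) atTop (nhds z) →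
    ∃ w₀ : E₀, j w₀ = w ∧ L w₀ = v ∧ K w₀ = z

/-- [Trostorff 2015, Lemma 3.2]: if `E₀, U, L, K` satisfy the hypothesis and
`(u,w) ∈ E₀ × H` is such that `K^⋄Ku − L^⋄w ∈ E`, i.e. there is `e ∈ E` with
`⟪e,x⟫_E = ⟪Ku,Kx⟫_U − ⟪w,Lx⟫_H` for all `x ∈ E₀`, then `w ∈ D(D)` and `Dw = e`. -/
theorem mem_domD_of_eq (G₀ : E →ₗ.[ℂ] H) (D₀ : H →ₗ.[ℂ] E)
    (hG₀dense : Dense (G₀.domain : Set E)) (hD₀dense : Dense (D₀.domain : Set H))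
    (hG₀closed : G₀.IsClosed) (hD₀closed : D₀.IsClosed)
    (hsub : G₀ ≤ Gop D₀)
    (j : E₀ →L[ℂ] E) (L : E₀ →L[ℂ] H) (K : E₀ →L[ℂ] U)
    -- hypothesis (a): `E₀ ⊆ E` dense and continuous
    (hj_inj : Function.Injective j) (hj_dense : DenseRange j)
    -- hypothesis (b): `(L,K)` is closed
    (hclosed : ClosedLK j L K)
    -- hypothesis (c): `G₀ ⊆ L ⊆ G` and `K` vanishes on `D(G₀)`
    (hLsubG : ∀ x : E₀, j x ∈ (Gop D₀).domain ∧ L x = Gap D₀ (j x))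
    (hG₀subL : ∀ u ∈ G₀.domain, ∃ x : E₀, j x = u)
    (hK0 : ∀ x : E₀, j x ∈ G₀.domain → K x = 0)
    (u : E₀) (w : H) (e : E)
    (he : ∀ x : E₀, (⟪e, j x⟫ : ℂ) = ⟪K u, K x⟫ - ⟪w, L x⟫) :
    w ∈ (Dop G₀).domain ∧ Dap G₀ w = e := by
  have key : ∀ x : G₀.domain, (⟪-e, (x : E)⟫ : ℂ) = ⟪w, G₀ x⟫ := by
    rintro ⟨v, hv⟩
    obtain ⟨x, rfl⟩ := hG₀subL v hv
    have h1 := he x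
    obtain ⟨hx, hLx⟩ := hLsubG x
    have h2 : G₀ ⟨j x, hv⟩ = Gop D₀ ⟨j x, hx⟩ := hsub.2 rfl
    have h3 : L x = G₀ ⟨j x, hv⟩ := by
      rw [hLx, h2, Gap, dif_pos hx]
    rw [hK0 x hv, inner_zero_right, zero_sub, h3] at h1
    simp only [inner_neg_left, h1, neg_neg]
  have hmem : w ∈ G₀.adjoint.domain := LinearPMap.mem_adjoint_domain_of_exists w ⟨-e, key⟩
  have hmem' : w ∈ (Dop G₀).domain := hmem
  refine ⟨hmem', ?_⟩
  have hA : G₀.adjoint ⟨w, hmem⟩ = -e := LinearPMap.adjoint_apply_eq hG₀dense ⟨w, hmem⟩ key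
  rw [Dap, dif_pos hmem']
  change -(G₀.adjoint ⟨w, hmem⟩) = e
  rw [hA, neg_neg]
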